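/- Let N be a finite cyclic group of odd order such that q does not divide p − 1 for all prime divisors p, q of |N|. Then N is good: for every group operation ∘ on N such that (N,·,∘) is a skew brace, every subgroup of (N,∘) is a left ideal of (N,·,∘). -/

import Mathlib

section SkewBraceDefs

variable {G : Type*}

/-- `op` is a group operation on `G` (associative, with identity and inverses). -/
def IsGroupOp (op : G → G → G) : Prop :=
  (∀ a b c : G, op (op a b) c = op a (op b c)) ∧
  ∃ e : G, (∀ a : G, op e a = a ∧ op a e = a) ∧ ∀ a : G, ∃ b : G, op a b = e ∧ op b a = e

/-- `(G, *, op)` is a skew brace: `op` is a group operation and the brace relation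
`a ∘ (b * c) = (a ∘ b) * a⁻¹ * (a ∘ c)` holds. -/
def IsSkewBrace [Group G] (op : G → G → G) : Prop :=
  IsGroupOp op ∧ ∀ a b c : G, op a (b * c) = op a b * a⁻¹ * op a c

/-- `S` is a subgroup of `(G, op)` (the two operations of a skew brace share the
identity `1`). -/
def IsCircSubgroup [Group G] (op : G → G → G) (S : Set G) : Prop :=
  (1 : G) ∈ S ∧ (∀ a ∈ S, ∀ b ∈ S, op a b ∈ S) ∧
  ∀ a ∈ S, ∃ b ∈ S, op a b = 1 ∧ op b a = 1

/-- A left ideal of the skew brace `(G, *, op)`: a subgroup `I` of `(G, *)` with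
`γ_a(I) ⊆ I` for all `a`, where `γ_a b = a⁻¹ * (a ∘ b)`. -/
def IsLeftIdeal [Group G] (op : G → G → G) (I : Subgroup G) : Prop :=
  ∀ a : G, ∀ b ∈ I, a⁻¹ * op a b ∈ I

/-- Additive version of `IsSkewBrace`: `a ∘ (b + c) = (a ∘ b) - a + (a ∘ c)`. -/
def IsSkewBraceAdd [AddGroup G] (op : G → G → G) : Prop :=
  IsGroupOp op ∧ ∀ a b c : G, op a (b + c) = op a b - a + op a c

/-- Additive version of `IsCircSubgroup`. -/
def IsCircSubgroupAdd [AddGroup G] (op : G → G → G) (S : Set G) : Prop :=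
  (0 : G) ∈ S ∧ (∀ a ∈ S, ∀ b ∈ S, op a b ∈ S) ∧
  ∀ a ∈ S, ∃ b ∈ S, op a b = 0 ∧ op b a = 0

/-- Additive version of `IsLeftIdeal`: `γ_a b = -a + (a ∘ b)`. -/
def IsLeftIdealAdd [AddGroup G] (op : G → G → G) (I : AddSubgroup G) : Prop :=
  ∀ a : G, ∀ b ∈ I, -a + op a b ∈ I

end SkewBraceDefs

/-!
Let `n = |N|`. As `N` is cyclic, `a ∘ x = a * x ^ u` for an integer `u` depending on `a`. Iterating
`n` times gives `u ^ n ≡ 1` modulo every prime `p ∣ n`, and `n` is coprime to `p - 1`, so `u ≡ 1`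
modulo `p`. The `k`-th `∘`-power of `a` is `a ^ (1 + u + ⋯ + u ^ (k - 1))`, and by lifting the
exponent this sum has the same `p`-adic valuation as `k` for every `p ∣ n`. Hence `a` has the same
order for both operations, and its `∘`-powers exhaust the subgroup that `a` generates in `N`. So a
`∘`-subgroup is closed under powers, hence under each `γ_a : x ↦ x ^ u` and its inverse, hence under
`a * b = a ∘ γ_a⁻¹ b`.
-/

open Finset Function

section GeometricSum

theorem emultiplicity_geom_sum {p : ℕ} (hp : p.Prime) (hp_odd : Odd p) {u : ℤ}
    (hpu : (p : ℤ) ∣ u - 1) (k : ℕ) :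
    emultiplicity (p : ℤ) (∑ i ∈ range k, u ^ i) = emultiplicity p k := by
  rcases eq_or_ne u 1 with rfl | hu
  · simp [Int.natCast_emultiplicity]
  have hp_int : Prime (p : ℤ) := Nat.prime_iff_prime_int.mp hp
  have hpu' : ¬ (p : ℤ) ∣ u := fun h ↦ hp_int.not_dvd_one ((dvd_sub_right h).mp hpu)
  have hfin : FiniteMultiplicity (p : ℤ) (u - 1) :=
    Int.finiteMultiplicity_iff.mpr ⟨by simpa using hp.ne_one, sub_ne_zero.mpr hu⟩
  have lifting_exponent := Int.emultiplicity_pow_sub_pow hp hp_odd hpu hpu' k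
  rw [one_pow, ← mul_geom_sum, emultiplicity_mul hp_int] at lifting_exponent
  exact ENat.add_right_injective_of_ne_top
    (finiteMultiplicity_iff_emultiplicity_ne_top.mp hfin) lifting_exponent

theorem natCast_dvd_geom_sum_iff {m : ℕ} (hm : Odd m) {u : ℤ}
    (hu : ∀ p : ℕ, p.Prime → p ∣ m → (p : ℤ) ∣ u - 1) (k : ℕ) :
    (m : ℤ) ∣ ∑ i ∈ range k, u ^ i ↔ m ∣ k := by
  have prime_pow_dvd_iff {p j : ℕ} (hp : p.Prime) (hpm : p ^ (j + 1) ∣ m) :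
      p ^ (j + 1) ∣ (∑ i ∈ range k, u ^ i).natAbs ↔ p ^ (j + 1) ∣ k := by
    have hp_dvd : p ∣ m := (dvd_pow_self p j.succ_ne_zero).trans hpm
    rw [← Int.natCast_dvd, Nat.cast_pow, pow_dvd_iff_le_emultiplicity,
      pow_dvd_iff_le_emultiplicity,
      emultiplicity_geom_sum hp (hm.of_dvd_nat hp_dvd) (hu p hp hp_dvd)]
  rw [Int.natCast_dvd, Nat.dvd_iff_prime_pow_dvd_dvd, Nat.dvd_iff_prime_pow_dvd_dvd]
  refine forall₃_congr fun p j hp ↦ forall_congr' fun hpm ↦ ?_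
  cases j with
  | zero => simp
  | succ j => exact prime_pow_dvd_iff hp hpm

end GeometricSum

theorem prime_dvd_sub_one_of_dvd_pow_sub_one {p n : ℕ} (hp : p.Prime) (hn : n ≠ 0)
    (hcop : n.Coprime (p - 1)) {u : ℤ} (hu : (p : ℤ) ∣ u ^ n - 1) : (p : ℤ) ∣ u - 1 := by
  have : Fact p.Prime := ⟨hp⟩
  rw [← ZMod.intCast_zmod_eq_zero_iff_dvd, Int.cast_sub, Int.cast_one, sub_eq_zero] at hu ⊢
  rw [Int.cast_pow] at hu
  have hu_ne_zero : (u : ZMod p) ≠ 0 := by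
    intro h
    simp [h, hn] at hu
  exact (pow_eq_one_iff_of_coprime hcop).mp ⟨hu, ZMod.pow_card_sub_one_eq_one hu_ne_zero⟩

section AffinePowerMap

variable {G : Type*} [CommGroup G]

theorem iterate_mul_zpow (a : G) (u : ℤ) (k : ℕ) (x : G) :
    (fun y ↦ a * y ^ u)^[k] x = a ^ (∑ i ∈ range k, u ^ i) * x ^ u ^ k := by
  induction k with
  | zero => simp
  | succ k ih =>
    rw [iterate_succ_apply', ih, mul_zpow, ← zpow_mul, ← zpow_mul, ← mul_assoc, ← zpow_one_add,
      ← pow_succ, geom_sum_succ, mul_comm u, add_comm 1]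

theorem minimalPeriod_mul_zpow_one {a : G} (ha : Odd (orderOf a)) {u : ℤ}
    (hu : ∀ p : ℕ, p.Prime → p ∣ orderOf a → (p : ℤ) ∣ u - 1) :
    minimalPeriod (fun y ↦ a * y ^ u) 1 = orderOf a := by
  have isPeriodicPt_iff (k : ℕ) : IsPeriodicPt (fun y ↦ a * y ^ u) k 1 ↔ orderOf a ∣ k := by
    rw [IsPeriodicPt, IsFixedPt, iterate_mul_zpow, one_zpow, mul_one,
      ← orderOf_dvd_iff_zpow_eq_one, natCast_dvd_geom_sum_iff ha hu]
  exact Nat.dvd_right_iff_eq.mp fun k ↦ by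
    rw [← isPeriodicPt_iff_minimalPeriod_dvd, isPeriodicPt_iff]

theorem exists_iterate_mul_zpow_one_eq {a : G} (ha : Odd (orderOf a)) {u : ℤ}
    (hu : ∀ p : ℕ, p.Prime → p ∣ orderOf a → (p : ℤ) ∣ u - 1) {x : G}
    (hx : x ∈ Subgroup.zpowers a) : ∃ k, (fun y ↦ a * y ^ u)^[k] 1 = x := by
  set orbit : ℕ → G := fun k ↦ (fun y ↦ a * y ^ u)^[k] 1
  have orbit_injOn : Set.InjOn orbit (Set.Iio (orderOf a)) :=
    minimalPeriod_mul_zpow_one ha hu ▸ iterate_injOn_Iio_minimalPeriod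
  have orbit_subset : orbit '' Set.Iio (orderOf a) ⊆ Subgroup.zpowers a := by
    rintro _ ⟨k, -, rfl⟩
    exact ⟨∑ i ∈ range k, u ^ i, by simp [orbit, iterate_mul_zpow]⟩
  have card_le : (Subgroup.zpowers a : Set G).ncard ≤ (orbit '' Set.Iio (orderOf a)).ncard := by
    rw [orbit_injOn.ncard_image, ← Nat.card_coe_set_eq, SetLike.coe_sort_coe,
      Nat.card_zpowers]
    simp [← Nat.card_coe_set_eq]
  have zpowers_finite : (Subgroup.zpowers a : Set G).Finite :=
    finite_zpowers.mpr (orderOf_pos_iff.mp ha.pos)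
  obtain ⟨k, -, hk⟩ := (Set.eq_of_subset_of_ncard_le orbit_subset card_le zpowers_finite).ge hx
  exact ⟨k, hk⟩

end AffinePowerMap

theorem IsGroupOp.iterate_natCard {G : Type*} {op : G → G → G} (hop : IsGroupOp op) (a x : G) :
    (op a)^[Nat.card G] x = x := by
  obtain ⟨op_assoc, e, he, hinv⟩ := hop
  choose inv _ inv_op using hinv
  let : Group G := @Group.ofLeftAxioms G ⟨op⟩ ⟨inv⟩ ⟨e⟩ op_assoc (fun a ↦ (he a).1) inv_op
  change (a * ·)^[Nat.card G] x = x
  simp only [mul_left_iterate, pow_card_eq_one', one_mul]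

theorem IsCircSubgroup.iterate_one_mem {G : Type*} [Group G] {op : G → G → G} {S : Set G}
    (hS : IsCircSubgroup op S) {a : G} (ha : a ∈ S) (k : ℕ) : (op a)^[k] 1 ∈ S := by
  induction k with
  | zero => exact hS.1
  | succ k ih =>
    rw [iterate_succ_apply']
    exact hS.2.1 a ha _ ih

namespace IsSkewBrace

section Group

variable {G : Type*} [Group G] {op : G → G → G}

/-- The map `γ_a : b ↦ a⁻¹ * (a ∘ b)` of a skew brace, as an endomorphism of `(G, *)`. -/
def gamma (hop : IsSkewBrace op) (a : G) : G →* G :=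
  MonoidHom.mk' (fun b ↦ a⁻¹ * op a b) fun b c ↦ by simp only [hop.2, mul_assoc]

theorem exists_op_eq_mul_zpow [IsCyclic G] (hop : IsSkewBrace op) (a : G) :
    ∃ u : ℤ, op a = fun x ↦ a * x ^ u := by
  obtain ⟨u, hu⟩ := (hop.gamma a).map_cyclic
  exact ⟨u, funext fun x ↦ eq_mul_of_inv_mul_eq (hu x)⟩

end Group

section CommGroup

variable {G : Type*} [CommGroup G] {op : G → G → G} {a : G} {u : ℤ}

theorem zpow_pow_natCard_eq_self (hop : IsSkewBrace op) (hu : op a = fun x ↦ a * x ^ u) (x : G) :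
    x ^ u ^ Nat.card G = x := by
  have iterate_eq (y : G) : a ^ (∑ i ∈ range (Nat.card G), u ^ i) * y ^ u ^ Nat.card G = y := by
    rw [← iterate_mul_zpow, ← hu, hop.1.iterate_natCard]
  have geom_sum_zpow : a ^ (∑ i ∈ range (Nat.card G), u ^ i) = 1 := by simpa using iterate_eq 1
  simpa [geom_sum_zpow] using iterate_eq x

variable [Finite G]

theorem prime_dvd_sub_one (hop : IsSkewBrace op) (hu : op a = fun x ↦ a * x ^ u) {p : ℕ}
    (hp : p.Prime) (hpG : p ∣ Nat.card G) (hcop : (Nat.card G).Coprime (p - 1)) :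
    (p : ℤ) ∣ u - 1 := by
  have : Fact p.Prime := ⟨hp⟩
  obtain ⟨x, hx⟩ := exists_prime_orderOf_dvd_card' p hpG
  refine prime_dvd_sub_one_of_dvd_pow_sub_one hp Nat.card_pos.ne' hcop ?_
  rw [← hx, orderOf_dvd_sub_iff_zpow_eq_zpow, zpow_one, hop.zpow_pow_natCard_eq_self hu]

theorem zpow_mem_of_isCircSubgroup (hop : IsSkewBrace op) (hu : op a = fun x ↦ a * x ^ u)
    (hodd : Odd (Nat.card G))
    (hcop : ∀ p : ℕ, p.Prime → p ∣ Nat.card G → (Nat.card G).Coprime (p - 1))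
    {S : Set G} (hS : IsCircSubgroup op S) (ha : a ∈ S) (j : ℤ) : a ^ j ∈ S := by
  have horder : orderOf a ∣ Nat.card G := orderOf_dvd_natCard a
  obtain ⟨k, hk⟩ := exists_iterate_mul_zpow_one_eq (hodd.of_dvd_nat horder)
    (fun p hp hpa ↦ hop.prime_dvd_sub_one hu hp (hpa.trans horder) (hcop p hp (hpa.trans horder)))
    (Subgroup.zpow_mem_zpowers a j)
  rw [← hk, ← hu]
  exact hS.iterate_one_mem ha k

theorem mul_mem_of_isCircSubgroup (hop : IsSkewBrace op) (hu : op a = fun x ↦ a * x ^ u)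
    {S : Set G} (hS : IsCircSubgroup op S) (ha : a ∈ S) {b : G} (hb : ∀ j : ℤ, b ^ j ∈ S) :
    a * b ∈ S := by
  -- `γ_a` is the `u`-th power map and `u ^ |G|` acts as `1`, so `u ^ (|G| - 1)` inverts `γ_a`.
  have op_zpow_eq : op a (b ^ u ^ (Nat.card G - 1)) = a * b := by
    simp only [hu, ← zpow_mul, ← pow_succ, Nat.sub_add_cancel Nat.card_pos,
      hop.zpow_pow_natCard_eq_self hu]
  exact op_zpow_eq ▸ hS.2.1 a ha _ (hb _)

end CommGroup

end IsSkewBrace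

/-- A finite cyclic group `N` of odd order with `q ∤ p - 1` for all prime divisors
`p, q` of `|N|` is good: for every skew brace operation `∘` on `N`, every subgroup of
`(N, ∘)` is a left ideal of `(N, ·, ∘)`. -/
theorem odd_cyclic_good (N : Type*) [Group N] [Finite N] (hcyc : IsCyclic N)
    (hodd : Odd (Nat.card N))
    (hpq : ∀ p q : ℕ, p.Prime → q.Prime → p ∣ Nat.card N → q ∣ Nat.card N →
      ¬ q ∣ p - 1) :
    ∀ op : N → N → N, IsSkewBrace op →
      ∀ S : Set N, IsCircSubgroup op S →
        ∃ I : Subgroup N, (I : Set N) = S ∧ IsLeftIdeal op I := by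
  intro op hop S hS
  let : CommGroup N := hcyc.commGroup
  have hcop (p : ℕ) (hp : p.Prime) (hpN : p ∣ Nat.card N) : (Nat.card N).Coprime (p - 1) :=
    Nat.coprime_of_dvd fun q hq hqN ↦ hpq p q hp hq hpN hqN
  choose u hu using hop.exists_op_eq_mul_zpow
  have zpow_mem {a : N} (ha : a ∈ S) (j : ℤ) : a ^ j ∈ S :=
    hop.zpow_mem_of_isCircSubgroup (hu a) hodd hcop hS ha j
  let I : Subgroup N :=
    { carrier := S
      one_mem' := hS.1
      mul_mem' := fun {a _} ha hb ↦ hop.mul_mem_of_isCircSubgroup (hu a) hS ha (zpow_mem hb)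
      inv_mem' := fun {a} ha ↦ zpow_neg_one a ▸ zpow_mem ha (-1) }
  refine ⟨I, rfl, fun a b hb ↦ ?_⟩
  rw [hu, inv_mul_cancel_left]
  exact zpow_mem hb (u a)
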